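/- arXiv:2002.00823 — 7 statements merged into one kernel-verified Lean document; each statement's English description precedes it below -/
import Mathlib

section
/- Let U ⊆ ℝⁿ be a nonempty open set with n ≥ 3, let a_{ij} : U → ℝ (for i ≠ j) be C¹ functions, and let μ_1,…,μ_n : U → ℝ be C² functions satisfying ∂_j μ_i = a_{ij}(μ_i − μ_j) on U for all i ≠ j. Then for all pairwise distinct indices i, j, k the following identity holds on U: (μ_i − μ_k)(∂_k a_{ij} − ∂_j a_{ik}) − (μ_j − μ_k)(∂_k a_{ij} + a_{ij} a_{jk} + a_{ik} a_{kj} − a_{ij} a_{ik}) = 0. -/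
/-!
On the open set `U` the second derivatives of the `C²` function `μ i` commute (`pd_pd_comm`), and
each mixed derivative is obtained by differentiating the right-hand side of the system with the
product rule and substituting the system again (`pd_pd_eq`). Writing
`μ i - μ j = (μ i - μ k) - (μ j - μ k)` in the equality of the two mixed derivatives gives the
identity.
-/

/-- Partial derivative in the `i`-th coordinate direction. -/
noncomputable def pd {n : ℕ} (i : Fin n) (f : (Fin n → ℝ) → ℝ) (x : Fin n → ℝ) : ℝ :=
  fderiv ℝ f x (Pi.single i 1)

theorem pd_pd_comm {n : ℕ} (j k : Fin n) {f : (Fin n → ℝ) → ℝ} {x : Fin n → ℝ}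
    (hf : ContDiffAt ℝ 2 f x) : pd k (pd j f) x = pd j (pd k f) x := by
  have hd : DifferentiableAt ℝ (fderiv ℝ f) x :=
    (hf.fderiv_right (m := 1) (by norm_num)).differentiableAt (by norm_num)
  have key : ∀ p q : Fin n,
      pd q (pd p f) x = fderiv ℝ (fderiv ℝ f) x (Pi.single q 1) (Pi.single p 1) := by
    intro p q
    have h := hd.hasFDerivAt.clm_apply (hasFDerivAt_const (Pi.single p (1 : ℝ)) x)
    change fderiv ℝ (fun y => fderiv ℝ f y (Pi.single p 1)) x (Pi.single q 1) = _
    rw [h.fderiv]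
    simp
  rw [key, key]
  exact hf.isSymmSndFDerivAt (by simp) _ _

/-- The product rule applied to a solution of `∂_j f = b (f - g)` near `x`. -/
theorem pd_pd_eq {n : ℕ} (j k : Fin n) {b f g : (Fin n → ℝ) → ℝ} {x : Fin n → ℝ}
    (hb : DifferentiableAt ℝ b x) (hf : DifferentiableAt ℝ f x) (hg : DifferentiableAt ℝ g x)
    (h : pd j f =ᶠ[nhds x] fun y => b y * (f y - g y)) :
    pd k (pd j f) x = pd k b x * (f x - g x) + b x * (pd k f x - pd k g x) := by
  have h' := hb.hasFDerivAt.mul (hf.hasFDerivAt.sub hg.hasFDerivAt)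
  have e : fderiv ℝ (pd j f) x = _ := h.fderiv_eq.trans h'.fderiv
  rw [pd, e]
  simp [pd]
  ring

/-- Compatibility condition `μ_{i,jk} = μ_{i,kj}` of the linear system
`∂_j μ_i = a_{ij}(μ_i − μ_j)`. -/
theorem stmt_0 {n : ℕ} (hn : 3 ≤ n) (U : Set (Fin n → ℝ)) (hUopen : IsOpen U)
    (hUne : U.Nonempty)
    (a : Fin n → Fin n → (Fin n → ℝ) → ℝ) (μ : Fin n → (Fin n → ℝ) → ℝ)
    (ha : ∀ i j : Fin n, i ≠ j → ContDiffOn ℝ 1 (a i j) U)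
    (hμ : ∀ i : Fin n, ContDiffOn ℝ 2 (μ i) U)
    (hsys : ∀ i j : Fin n, i ≠ j → ∀ x ∈ U, pd j (μ i) x = a i j x * (μ i x - μ j x)) :
    ∀ i j k : Fin n, i ≠ j → j ≠ k → i ≠ k → ∀ x ∈ U,
      (μ i x - μ k x) * (pd k (a i j) x - pd j (a i k) x)
        - (μ j x - μ k x) *
            (pd k (a i j) x + a i j x * a j k x + a i k x * a k j x - a i j x * a i k x)
        = 0 := by
  intro i j k hij hjk hik x hx
  have hU : U ∈ nhds x := hUopen.mem_nhds hx
  have dμ : ∀ p, DifferentiableAt ℝ (μ p) x := fun p =>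
    ((hμ p).contDiffAt hU).differentiableAt (by norm_num)
  have da : ∀ p q, p ≠ q → DifferentiableAt ℝ (a p q) x := fun p q hpq =>
    ((ha p q hpq).contDiffAt hU).differentiableAt (by norm_num)
  have mixed : ∀ p q r, p ≠ q → pd r (pd q (μ p)) x =
      pd r (a p q) x * (μ p x - μ q x) + a p q x * (pd r (μ p) x - pd r (μ q) x) :=
    fun p q r hpq => pd_pd_eq q r (da p q hpq) (dμ p) (dμ q)
      (Filter.mem_of_superset hU fun y hy => hsys p q hpq y hy)
  have h := pd_pd_comm j k ((hμ i).contDiffAt hU)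
  rw [mixed i j k hij, mixed i k j hik, hsys i k hik x hx, hsys j k hjk x hx,
    hsys i j hij x hx, hsys k j hjk.symm x hx] at h
  linear_combination h
end

section
/- Let U ⊆ ℝⁿ be a nonempty open set with n ≥ 3, let a_{ij} (for i ≠ j) be continuous functions on U, and let ω_{ij} (for i ≠ j) be C¹ functions on U that are symmetric (ω_{ij} = ω_{ji}) and satisfy the first-order integrability condition: ∂_k ω_{ij} − ∂_j ω_{ik} = a_{ij} ω_{ik} + a_{ji} ω_{jk} − a_{ik} ω_{ij} − a_{ki} ω_{kj} on U for all pairwise distinct i, j, k. Let μ_1,…,μ_n : U → ℝ be C² functions satisfying ∂_j μ_i = a_{ij}(μ_i − μ_j) on U for all i ≠ j, and define Θ_{ij} := ω_{ij}(μ_i − μ_j). Then ∂_k Θ_{ij} + ∂_i Θ_{jk} + ∂_j Θ_{ki} = 0 on U for all pairwise distinct i, j, k. -/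
/-- Functions agreeing on an open set have the same partial derivatives there. -/
lemma pd_congr_of_isOpen {n : ℕ} {U : Set (Fin n → ℝ)} (hU : IsOpen U)
    {f g : (Fin n → ℝ) → ℝ} (h : ∀ x ∈ U, f x = g x) (k : Fin n) {x : Fin n → ℝ} (hx : x ∈ U) :
    pd k f x = pd k g x := by
  have hfg : f =ᶠ[nhds x] g := Filter.eventually_of_mem (hU.mem_nhds hx) h
  rw [pd, pd, hfg.fderiv_eq]

/-- The product rule for `Θ = w (u - v)`. -/
lemma pd_theta {n : ℕ} {w u v : (Fin n → ℝ) → ℝ} {x : Fin n → ℝ}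
    (hw : DifferentiableAt ℝ w x) (hu : DifferentiableAt ℝ u x) (hv : DifferentiableAt ℝ v x)
    (k : Fin n) {T : (Fin n → ℝ) → ℝ} (hT : ∀ y, T y = w y * (u y - v y)) :
    pd k T x = pd k w x * (u x - v x) + w x * (pd k u x - pd k v x) := by
  obtain rfl : T = fun y => w y * (u y - v y) := funext hT
  have h := (hw.hasFDerivAt.mul (hu.hasFDerivAt.sub hv.hasFDerivAt)).fderiv
  have h' := congrArg (fun L => L (Pi.single k 1)) h
  simp only [pd]
  refine h'.trans ?_
  simp
  ring

/-- If the symmetric family `ω_{ij}` satisfies the first-order integrability condition,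
then the cyclic sum `∂_k Θ_{ij} + ∂_i Θ_{jk} + ∂_j Θ_{ki}` vanishes, where
`Θ_{ij} = ω_{ij}(μ_i − μ_j)` and `∂_j μ_i = a_{ij}(μ_i − μ_j)`. -/
theorem stmt_3 {n : ℕ} (hn : 3 ≤ n) (U : Set (Fin n → ℝ)) (hUopen : IsOpen U)
    (hUne : U.Nonempty)
    (a ω : Fin n → Fin n → (Fin n → ℝ) → ℝ) (μ : Fin n → (Fin n → ℝ) → ℝ)
    (ha : ∀ i j : Fin n, i ≠ j → ContinuousOn (a i j) U)
    (hω : ∀ i j : Fin n, i ≠ j → ContDiffOn ℝ 1 (ω i j) U)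
    (hsymm : ∀ i j : Fin n, i ≠ j → ∀ x ∈ U, ω i j x = ω j i x)
    (hint : ∀ i j k : Fin n, i ≠ j → j ≠ k → i ≠ k → ∀ x ∈ U,
      pd k (ω i j) x - pd j (ω i k) x
        = a i j x * ω i k x + a j i x * ω j k x - a i k x * ω i j x - a k i x * ω k j x)
    (hμ : ∀ i : Fin n, ContDiffOn ℝ 2 (μ i) U)
    (hsys : ∀ i j : Fin n, i ≠ j → ∀ x ∈ U, pd j (μ i) x = a i j x * (μ i x - μ j x))
    (Θ : Fin n → Fin n → (Fin n → ℝ) → ℝ)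
    (hΘ : ∀ i j : Fin n, i ≠ j → ∀ x, Θ i j x = ω i j x * (μ i x - μ j x)) :
    ∀ i j k : Fin n, i ≠ j → j ≠ k → i ≠ k → ∀ x ∈ U,
      pd k (Θ i j) x + pd i (Θ j k) x + pd j (Θ k i) x = 0 := by
  intro i j k hij hjk hik x hx
  have dω : ∀ p q : Fin n, p ≠ q → DifferentiableAt ℝ (ω p q) x := fun p q h =>
    ((hω p q h).contDiffAt (hUopen.mem_nhds hx)).differentiableAt (by norm_num)
  have dμ : ∀ p : Fin n, DifferentiableAt ℝ (μ p) x := fun p =>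
    ((hμ p).contDiffAt (hUopen.mem_nhds hx)).differentiableAt (by norm_num)
  rw [pd_theta (dω i j hij) (dμ i) (dμ j) k (hΘ i j hij),
    pd_theta (dω j k hjk) (dμ j) (dμ k) i (hΘ j k hjk),
    pd_theta (dω k i hik.symm) (dμ k) (dμ i) j (hΘ k i hik.symm),
    hsys i k hik x hx, hsys j k hjk x hx, hsys j i hij.symm x hx, hsys k i hik.symm x hx,
    hsys k j hjk.symm x hx, hsys i j hij x hx]
  have h1 := hint i j k hij hjk hik x hx
  have h2 := hint j k i hjk hik.symm hij.symm x hx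
  have h3 := hint k i j hik.symm hij hjk.symm x hx
  -- Symmetry leaves only `ω_{ij}`, `ω_{jk}`, `ω_{ki}` and one derivative of each.
  rw [pd_congr_of_isOpen hUopen (hsymm i k hik) j hx, hsymm i k hik x hx,
    hsymm k j hjk.symm x hx] at h1
  rw [pd_congr_of_isOpen hUopen (hsymm j i hij.symm) k hx, hsymm j i hij.symm x hx,
    hsymm i k hik x hx] at h2
  rw [pd_congr_of_isOpen hUopen (hsymm k j hjk.symm) i hx, hsymm k j hjk.symm x hx,
    hsymm j i hij.symm x hx] at h3
  linear_combination μ i x * h1 + μ j x * h2 + μ k x * h3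
end

section
/- Let U ⊆ ℝⁿ be a nonempty open set with n ≥ 3, and let λ_1,…,λ_n : U → ℝ be C² functions with pairwise distinct values. For i ≠ j set a_{ij} := ∂_j λ_i / (λ_i − λ_j), and assume the Tsarev condition ∂_k a_{ij} = ∂_j a_{ik} on U for all pairwise distinct i, j, k. Let k₀ : U → ℝ be a C³ function and define, for i ≠ j, ω_{ij} := ∂_i ∂_j k₀ + a_{ij} ∂_i k₀ + a_{ji} ∂_j k₀. Then ω satisfies the first-order integrability condition: ∂_k ω_{ij} − ∂_j ω_{ik} = a_{ij} ω_{ik} + a_{ji} ω_{jk} − a_{ik} ω_{ij} − a_{ki} ω_{kj} on U for all pairwise distinct i, j, k. -/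
section PartialDerivatives

variable {n : ℕ} {f g : (Fin n → ℝ) → ℝ} {x : Fin n → ℝ}

lemma pd_add (i : Fin n) (hf : DifferentiableAt ℝ f x) (hg : DifferentiableAt ℝ g x) :
    pd i (fun y => f y + g y) x = pd i f x + pd i g x := by
  simp [pd, fderiv_fun_add hf hg]

lemma pd_sub (i : Fin n) (hf : DifferentiableAt ℝ f x) (hg : DifferentiableAt ℝ g x) :
    pd i (fun y => f y - g y) x = pd i f x - pd i g x := by
  simp [pd, fderiv_fun_sub hf hg]

lemma pd_mul (i : Fin n) (hf : DifferentiableAt ℝ f x) (hg : DifferentiableAt ℝ g x) :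
    pd i (fun y => f y * g y) x = pd i f x * g x + f x * pd i g x := by
  simp [pd, fderiv_fun_mul hf hg]
  ring

lemma pd_congr (i : Fin n) (h : f =ᶠ[nhds x] g) : pd i f x = pd i g x := by
  simp [pd, h.fderiv_eq]

lemma contDiffAt_pd (i : Fin n) {m k : WithTop ℕ∞} (hf : ContDiffAt ℝ k f x) (h : m + 1 ≤ k) :
    ContDiffAt ℝ m (pd i f) x :=
  (hf.fderiv_right h).clm_apply contDiffAt_const

lemma pd_pd (i j : Fin n) (hf : ContDiffAt ℝ 2 f x) :
    pd i (pd j f) x = fderiv ℝ (fderiv ℝ f) x (Pi.single i 1) (Pi.single j 1) := by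
  have hd : DifferentiableAt ℝ (fderiv ℝ f) x :=
    (hf.fderiv_right (m := 1) (by norm_num)).differentiableAt (by norm_num)
  change fderiv ℝ (fun y => fderiv ℝ f y (Pi.single j 1)) x (Pi.single i 1) = _
  rw [fderiv_clm_apply hd (differentiableAt_const _)]
  simp

lemma pd_comm (i j : Fin n) (hf : ContDiffAt ℝ 2 f x) : pd i (pd j f) x = pd j (pd i f) x := by
  rw [pd_pd i j hf, pd_pd j i hf]
  exact (hf.isSymmSndFDerivAt (by simp)).eq _ _

end PartialDerivatives

/-- The derivative of the coefficient `a_{ji}` in a third direction `k`, obtained from the symmetry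
of the second derivatives of `λ_j` and the Tsarev condition `hT`. -/
lemma pd_coeff {n : ℕ} {U : Set (Fin n → ℝ)} (hUopen : IsOpen U)
    {lam : Fin n → (Fin n → ℝ) → ℝ} {a : Fin n → Fin n → (Fin n → ℝ) → ℝ}
    (hlam : ∀ i : Fin n, ContDiffOn ℝ 2 (lam i) U)
    (hdist : ∀ i j : Fin n, i ≠ j → ∀ x ∈ U, lam i x ≠ lam j x)
    (hpd : ∀ i j : Fin n, i ≠ j → ∀ x ∈ U, pd j (lam i) x = a i j x * (lam i x - lam j x))
    (hda : ∀ i j : Fin n, i ≠ j → ∀ x ∈ U, DifferentiableAt ℝ (a i j) x)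
    {i j k : Fin n} (hij : i ≠ j) (hjk : j ≠ k) (hik : i ≠ k) {x : Fin n → ℝ} (hx : x ∈ U)
    (hT : pd k (a j i) x = pd i (a j k) x) :
    pd k (a j i) x = a j i x * a j k x - a j i x * a i k x - a j k x * a k i x := by
  have hU := hUopen.mem_nhds hx
  have hl (p : Fin n) : DifferentiableAt ℝ (lam p) x :=
    ((hlam p).contDiffAt hU).differentiableAt (by norm_num)
  have expand (p q : Fin n) (hp : j ≠ p) : pd q (pd p (lam j)) x =
      pd q (a j p) x * (lam j x - lam p x) + a j p x * (pd q (lam j) x - pd q (lam p) x) := by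
    have e : pd p (lam j) =ᶠ[nhds x] fun y => a j p y * (lam j y - lam p y) := by
      filter_upwards [hU] with y hy using hpd j p hp y hy
    rw [pd_congr q e, pd_mul q (hda j p hp x hx) ((hl j).fun_sub (hl p)), pd_sub q (hl j) (hl p)]
  have h := pd_comm k i ((hlam j).contDiffAt hU)
  rw [expand i k hij.symm, expand k i hjk, ← hT, hpd j k hjk x hx, hpd i k hik x hx,
    hpd j i hij.symm x hx, hpd k i hik.symm x hx] at h
  have hne : lam k x - lam i x ≠ 0 := sub_ne_zero.mpr (hdist k i hik.symm x hx)
  apply mul_right_cancel₀ hne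
  linear_combination h

/-- Triviality implies integrability at first order: if
`ω_{ij} = ∂_i ∂_j k₀ + a_{ij} ∂_i k₀ + a_{ji} ∂_j k₀` for a generating function `k₀`,
then `ω` satisfies the first-order integrability condition. -/
theorem stmt_4 {n : ℕ} (hn : 3 ≤ n) (U : Set (Fin n → ℝ)) (hUopen : IsOpen U)
    (hUne : U.Nonempty)
    (lam : Fin n → (Fin n → ℝ) → ℝ)
    (hlam : ∀ i : Fin n, ContDiffOn ℝ 2 (lam i) U)
    (hdist : ∀ i j : Fin n, i ≠ j → ∀ x ∈ U, lam i x ≠ lam j x)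
    (a : Fin n → Fin n → (Fin n → ℝ) → ℝ)
    (ha : ∀ i j : Fin n, i ≠ j → ∀ x, a i j x = pd j (lam i) x / (lam i x - lam j x))
    (hTsarev : ∀ i j k : Fin n, i ≠ j → j ≠ k → i ≠ k → ∀ x ∈ U,
      pd k (a i j) x = pd j (a i k) x)
    (k₀ : (Fin n → ℝ) → ℝ) (hk₀ : ContDiffOn ℝ 3 k₀ U)
    (ω : Fin n → Fin n → (Fin n → ℝ) → ℝ)
    (hω : ∀ i j : Fin n, i ≠ j → ∀ x,
      ω i j x = pd i (pd j k₀) x + a i j x * pd i k₀ x + a j i x * pd j k₀ x) :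
    ∀ i j k : Fin n, i ≠ j → j ≠ k → i ≠ k → ∀ x ∈ U,
      pd k (ω i j) x - pd j (ω i k) x
        = a i j x * ω i k x + a j i x * ω j k x - a i k x * ω i j x - a k i x * ω k j x := by
  intro i j k hij hjk hik x hx
  have hU := hUopen.mem_nhds hx
  have hda (p q : Fin n) (hpq : p ≠ q) (y : Fin n → ℝ) (hy : y ∈ U) :
      DifferentiableAt ℝ (a p q) y := by
    have hl (r : Fin n) : ContDiffAt ℝ 2 (lam r) y := (hlam r).contDiffAt (hUopen.mem_nhds hy)
    have hn1 : DifferentiableAt ℝ (pd q (lam p)) y :=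
      (contDiffAt_pd (m := 1) q (hl p) (by norm_num)).differentiableAt (by norm_num)
    rw [show a p q = fun z => pd q (lam p) z / (lam p z - lam q z) from funext (ha p q hpq)]
    have hd : DifferentiableAt ℝ (fun z => lam p z - lam q z) y :=
      ((hl p).differentiableAt (by norm_num)).fun_sub ((hl q).differentiableAt (by norm_num))
    simp only [div_eq_mul_inv]
    exact hn1.fun_mul (hd.fun_inv (sub_ne_zero.mpr (hdist p q hpq y hy)))
  have hpd (p q : Fin n) (hpq : p ≠ q) (y : Fin n → ℝ) (hy : y ∈ U) :
      pd q (lam p) y = a p q y * (lam p y - lam q y) := by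
    rw [ha p q hpq, div_mul_cancel₀ _ (sub_ne_zero.mpr (hdist p q hpq y hy))]
  have hk : ContDiffAt ℝ 3 k₀ x := hk₀.contDiffAt hU
  have hk1 (p : Fin n) : ContDiffAt ℝ 2 (pd p k₀) x := contDiffAt_pd p hk (by norm_num)
  have hK (p : Fin n) : DifferentiableAt ℝ (pd p k₀) x :=
    (hk1 p).differentiableAt (by norm_num)
  have hK2 (p q : Fin n) : DifferentiableAt ℝ (pd p (pd q k₀)) x :=
    (contDiffAt_pd (m := 1) p (hk1 q) (by norm_num)).differentiableAt (by norm_num)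
  -- Symmetry must hold on a neighbourhood in order to be differentiated once more.
  have hsymm (p q : Fin n) : pd p (pd q k₀) =ᶠ[nhds x] pd q (pd p k₀) := by
    filter_upwards [hU] with y hy
    exact pd_comm p q ((hk₀.contDiffAt (hUopen.mem_nhds hy)).of_le (by norm_num))
  have hthird : pd k (pd i (pd j k₀)) x = pd j (pd i (pd k k₀)) x := by
    rw [pd_congr k (hsymm i j), pd_congr j (hsymm i k)]
    exact pd_comm k j (hk1 i)
  have expand (p q r : Fin n) (hpq : p ≠ q) : pd r (ω p q) x = pd r (pd p (pd q k₀)) x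
      + (pd r (a p q) x * pd p k₀ x + a p q x * pd r (pd p k₀) x)
      + (pd r (a q p) x * pd q k₀ x + a q p x * pd r (pd q k₀) x) := by
    have h1 := hda p q hpq x hx
    have h2 := hda q p hpq.symm x hx
    rw [show ω p q = fun y => pd p (pd q k₀) y + a p q y * pd p k₀ y + a q p y * pd q k₀ y
      from funext (hω p q hpq),
      pd_add r ((hK2 p q).fun_add (h1.fun_mul (hK p))) (h2.fun_mul (hK q)),
      pd_add r (hK2 p q) (h1.fun_mul (hK p)), pd_mul r h1 (hK p), pd_mul r h2 (hK q)]
  have c1 := pd_coeff hUopen hlam hdist hpd hda hij hjk hik hx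
    (hTsarev j i k hij.symm hik hjk x hx)
  have c2 := pd_coeff hUopen hlam hdist hpd hda hik hjk.symm hij hx
    (hTsarev k i j hik.symm hij hjk.symm x hx)
  rw [expand i j k hij, expand i k j hik, hthird, hTsarev i j k hij hjk hik x hx, c1, c2,
    hω i k hik, hω j k hjk, hω i j hij, hω k j hjk.symm, (hsymm k i).eq_of_nhds,
    (hsymm k j).eq_of_nhds, (hsymm j i).eq_of_nhds]
  ring
end

section
/- Let U ⊆ ℝⁿ be a nonempty open set with n ≥ 3, and let λ_1,…,λ_n : U → ℝ be C² functions with pairwise distinct values. For i ≠ j set a_{ij} := ∂_j λ_i / (λ_i − λ_j), and assume the Tsarev condition ∂_k a_{ij} = ∂_j a_{ik} on U for all pairwise distinct i, j, k. Let C_1,…,C_n : ℝ → ℝ be C¹ functions, and regard C_i as a function on U depending only on the i-th coordinate R_i. Then for all pairwise distinct i, j, k the following cyclic identity holds on U: ∂_k[(C_i(R_i) ∂_j λ_i + C_j(R_j) ∂_i λ_j)/(λ_i − λ_j)] + ∂_i[(C_j(R_j) ∂_k λ_j + C_k(R_k) ∂_j λ_k)/(λ_j − λ_k)] + ∂_j[(C_k(R_k)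 ∂_i λ_k + C_i(R_i) ∂_k λ_i)/(λ_k − λ_i)] = 0. -/
lemma differentiableAt_pd {n : ℕ} {f : (Fin n → ℝ) → ℝ} {x : Fin n → ℝ} (j : Fin n)
    (hf : ContDiffAt ℝ 2 f x) : DifferentiableAt ℝ (pd j f) x := by
  have h : ContDiffAt ℝ 1 (fderiv ℝ f) x := hf.fderiv_right (by norm_num)
  exact (h.differentiableAt (by norm_num)).clm_apply (differentiableAt_const _)

/-- A function of the `i`-th coordinate alone acts as a constant for `∂_k` when `k ≠ i`. -/
lemma pd_coord_mul {n : ℕ} {i k : Fin n} (hik : i ≠ k) {c : ℝ → ℝ} {f : (Fin n → ℝ) → ℝ}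
    {x : Fin n → ℝ} (hc : DifferentiableAt ℝ c (x i)) (hf : DifferentiableAt ℝ f x) :
    DifferentiableAt ℝ (fun y => c (y i) * f y) x ∧
      pd k (fun y => c (y i) * f y) x = c (x i) * pd k f x := by
  have hp : HasFDerivAt (fun y : Fin n → ℝ => y i)
      (ContinuousLinearMap.proj (R := ℝ) (φ := fun _ : Fin n => ℝ) i) x :=
    hasFDerivAt_apply i x
  have h := (hc.hasDerivAt.comp_hasFDerivAt x hp).mul hf.hasFDerivAt
  refine ⟨h.differentiableAt, ?_⟩
  have h2 := congrArg (fun L => L (Pi.single k 1)) h.fderiv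
  -- The derivative of `c` is multiplied by the `i`-th coordinate of the `k`-th basis vector, which is zero.
  simp [Pi.single_eq_of_ne hik] at h2
  exact h2

/-- The `∂_k`-derivative of one term of the cyclic sum, expressed through the functions
`a_{ij}` and `a_{ji}`. -/
lemma pd_quotient {n : ℕ} {U : Set (Fin n → ℝ)} (hUopen : IsOpen U)
    {lam : Fin n → (Fin n → ℝ) → ℝ}
    (hlam : ∀ i : Fin n, ContDiffOn ℝ 2 (lam i) U)
    (hdist : ∀ i j : Fin n, i ≠ j → ∀ x ∈ U, lam i x ≠ lam j x)
    {a : Fin n → Fin n → (Fin n → ℝ) → ℝ}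
    (ha : ∀ i j : Fin n, i ≠ j → ∀ x, a i j x = pd j (lam i) x / (lam i x - lam j x))
    {C : Fin n → ℝ → ℝ} (hC : ∀ i, ContDiff ℝ 1 (C i))
    {i j k : Fin n} (hij : i ≠ j) (hjk : j ≠ k) (hik : i ≠ k) {x : Fin n → ℝ} (hx : x ∈ U) :
    pd k (fun y => (C i (y i) * pd j (lam i) y + C j (y j) * pd i (lam j) y)
        / (lam i y - lam j y)) x
      = C i (x i) * pd k (a i j) x - C j (x j) * pd k (a j i) x := by
  have hU : U ∈ nhds x := hUopen.mem_nhds hx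
  have hL : ∀ p, ContDiffAt ℝ 2 (lam p) x := fun p => (hlam p).contDiffAt hU
  have hd : ∀ p, DifferentiableAt ℝ (lam p) x := fun p => (hL p).differentiableAt (by norm_num)
  have hda : ∀ p q, p ≠ q → DifferentiableAt ℝ (a p q) x := by
    intro p q hpq
    rw [show a p q = fun y => pd q (lam p) y / (lam p y - lam q y) from funext (ha p q hpq)]
    have hs := (hd p).fun_sub (hd q)
    simp only [div_eq_mul_inv]
    exact (differentiableAt_pd q (hL p)).fun_mul (hs.fun_inv <|
      sub_ne_zero.mpr (hdist p q hpq x hx))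
  have hCd : ∀ p, DifferentiableAt ℝ (C p) (x p) := fun p =>
    ((hC p).differentiable (by norm_num)).differentiableAt
  obtain ⟨d1, e1⟩ := pd_coord_mul hik (hCd i) (hda i j hij)
  obtain ⟨d2, e2⟩ := pd_coord_mul hjk (hCd j) (hda j i hij.symm)
  have hEq : (fun y => (C i (y i) * pd j (lam i) y + C j (y j) * pd i (lam j) y)
        / (lam i y - lam j y)) =ᶠ[nhds x]
      fun y => C i (y i) * a i j y - C j (y j) * a j i y := by
    filter_upwards [hU] with y hy
    rw [ha i j hij, ha j i hij.symm]
    have h1 := sub_ne_zero.mpr (hdist i j hij y hy)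
    rw [← neg_sub (lam i y) (lam j y), div_neg]
    field_simp
    ring
  rw [← e1, ← e2]
  simp only [pd] at hEq ⊢
  rw [hEq.fderiv_eq, fderiv_fun_sub d1 d2]
  rfl

/-- The cyclic identity showing that the terms
`(C_i(R_i) ∂_j λ_i + C_j(R_j) ∂_i λ_j)/(λ_i − λ_j)` form a closed 2-cochain, under the
Tsarev condition for `a_{ij} = ∂_j λ_i / (λ_i − λ_j)`. -/
theorem stmt_6 {n : ℕ} (hn : 3 ≤ n) (U : Set (Fin n → ℝ)) (hUopen : IsOpen U)
    (hUne : U.Nonempty)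
    (lam : Fin n → (Fin n → ℝ) → ℝ)
    (hlam : ∀ i : Fin n, ContDiffOn ℝ 2 (lam i) U)
    (hdist : ∀ i j : Fin n, i ≠ j → ∀ x ∈ U, lam i x ≠ lam j x)
    (a : Fin n → Fin n → (Fin n → ℝ) → ℝ)
    (ha : ∀ i j : Fin n, i ≠ j → ∀ x, a i j x = pd j (lam i) x / (lam i x - lam j x))
    (hTsarev : ∀ i j k : Fin n, i ≠ j → j ≠ k → i ≠ k → ∀ x ∈ U,
      pd k (a i j) x = pd j (a i k) x)
    (C : Fin n → ℝ → ℝ) (hC : ∀ i, ContDiff ℝ 1 (C i)) :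
    ∀ i j k : Fin n, i ≠ j → j ≠ k → i ≠ k → ∀ x ∈ U,
      pd k (fun y => (C i (y i) * pd j (lam i) y + C j (y j) * pd i (lam j) y)
        / (lam i y - lam j y)) x
      + pd i (fun y => (C j (y j) * pd k (lam j) y + C k (y k) * pd j (lam k) y)
        / (lam j y - lam k y)) x
      + pd j (fun y => (C k (y k) * pd i (lam k) y + C i (y i) * pd k (lam i) y)
        / (lam k y - lam i y)) x = 0 := by
  intro i j k hij hjk hik x hx
  rw [pd_quotient hUopen hlam hdist ha hC hij hjk hik hx,
    pd_quotient hUopen hlam hdist ha hC hjk hik.symm hij.symm hx,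
    pd_quotient hUopen hlam hdist ha hC hik.symm hij hjk.symm hx,
    hTsarev i j k hij hjk hik x hx, hTsarev j i k hij.symm hik hjk x hx,
    hTsarev k i j hik.symm hij hjk.symm x hx]
  ring
end

section
/- Let U ⊆ ℝⁿ be a nonempty open set with n ≥ 2, and let λ_1,…,λ_n : U → ℝ be C¹ functions with pairwise distinct values. For i ≠ j set a_{ij} := ∂_j λ_i / (λ_i − λ_j). Let μ_1,…,μ_n : U → ℝ be C¹ functions satisfying ∂_j μ_i = a_{ij}(μ_i − μ_j) on U for all i ≠ j. Let s_{ij} (i ≠ j) be C¹ functions on U and define D_{ij} := s_{ij}(μ_i − μ_j) and d_{ij} := s_{ij}(λ_i − λ_j). Then for all i ≠ j the following identity holds on U: (∂_i λ_i)·D_{ij} + (λ_i − λ_j)·∂_i D_{ij} = (∂_i μ_i)·d_{ij} + (μ_i − μ_j)·∂_i d_{ij}. -/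
/-- Product rule for `pd` in the form `∂_i (f (g - h)) = ∂_i f (g - h) + f (∂_i g - ∂_i h)`. -/
theorem pd_mul_sub {n : ℕ} (i : Fin n) {f g h : (Fin n → ℝ) → ℝ} {x : Fin n → ℝ}
    (hf : DifferentiableAt ℝ f x) (hg : DifferentiableAt ℝ g x) (hh : DifferentiableAt ℝ h x) :
    pd i (fun y => f y * (g y - h y)) x
      = pd i f x * (g x - h x) + f x * (pd i g x - pd i h x) := by
  have key := hf.hasFDerivAt.fun_mul (hg.hasFDerivAt.fun_sub hh.hasFDerivAt)
  simp only [pd, key.fderiv, add_apply, smul_apply, sub_apply, smul_eq_mul]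
  ring

/-- Equation (3.44) of the second-order integrability analysis holds automatically for
`D_{ij} = s_{ij}(μ_i − μ_j)`, `d_{ij} = s_{ij}(λ_i − λ_j)`:
`(∂_i λ_i) D_{ij} + (λ_i − λ_j) ∂_i D_{ij} = (∂_i μ_i) d_{ij} + (μ_i − μ_j) ∂_i d_{ij}`. -/
theorem stmt_7 {n : ℕ} (hn : 2 ≤ n) (U : Set (Fin n → ℝ)) (hUopen : IsOpen U)
    (hUne : U.Nonempty)
    (lam : Fin n → (Fin n → ℝ) → ℝ)
    (hlam : ∀ i : Fin n, ContDiffOn ℝ 1 (lam i) U)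
    (hdist : ∀ i j : Fin n, i ≠ j → ∀ x ∈ U, lam i x ≠ lam j x)
    (μ : Fin n → (Fin n → ℝ) → ℝ)
    (hμ : ∀ i : Fin n, ContDiffOn ℝ 1 (μ i) U)
    (hsys : ∀ i j : Fin n, i ≠ j → ∀ x ∈ U,
      pd j (μ i) x = (pd j (lam i) x / (lam i x - lam j x)) * (μ i x - μ j x))
    (s : Fin n → Fin n → (Fin n → ℝ) → ℝ)
    (hs : ∀ i j : Fin n, i ≠ j → ContDiffOn ℝ 1 (s i j) U)
    (D d : Fin n → Fin n → (Fin n → ℝ) → ℝ)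
    (hD : ∀ i j : Fin n, i ≠ j → ∀ x, D i j x = s i j x * (μ i x - μ j x))
    (hd : ∀ i j : Fin n, i ≠ j → ∀ x, d i j x = s i j x * (lam i x - lam j x)) :
    ∀ i j : Fin n, i ≠ j → ∀ x ∈ U,
      pd i (lam i) x * D i j x + (lam i x - lam j x) * pd i (D i j) x
        = pd i (μ i) x * d i j x + (μ i x - μ j x) * pd i (d i j) x := by
  intro i j hij x hx
  have diff {f : (Fin n → ℝ) → ℝ} (hf : ContDiffOn ℝ 1 f U) : DifferentiableAt ℝ f x :=
    (hf.differentiableOn one_ne_zero).differentiableAt (hUopen.mem_nhds hx)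
  have hDpd : pd i (D i j) x
      = pd i (s i j) x * (μ i x - μ j x) + s i j x * (pd i (μ i) x - pd i (μ j) x) := by
    rw [funext (hD i j hij)]
    exact pd_mul_sub i (diff (hs i j hij)) (diff (hμ i)) (diff (hμ j))
  have hdpd : pd i (d i j) x
      = pd i (s i j) x * (lam i x - lam j x) + s i j x * (pd i (lam i) x - pd i (lam j) x) := by
    rw [funext (hd i j hij)]
    exact pd_mul_sub i (diff (hs i j hij)) (diff (hlam i)) (diff (hlam j))
  have hne : lam j x - lam i x ≠ 0 := sub_ne_zero.mpr (hdist j i hij.symm x hx)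
  have hlin : (lam j x - lam i x) * pd i (μ j) x = (μ j x - μ i x) * pd i (lam j) x := by
    rw [hsys j i hij.symm x hx]
    field_simp
  rw [hDpd, hdpd, hD i j hij, hd i j hij]
  linear_combination s i j x * hlin
end

section
/- Let n ≥ 1 and let U = (a_1,b_1) × ⋯ × (a_n,b_n) ⊆ ℝⁿ be a nonempty open box. Let f : U → ℝ be a C² function such that ∂_i ∂_j f = 0 on U for all i ≠ j. Then there exist C² functions g_i : (a_i,b_i) → ℝ (i = 1,…,n) such that f(x_1,…,x_n) = g_1(x_1) + ⋯ + g_n(x_n) for all (x_1,…,x_n) ∈ U. -/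
lemma fderiv_apply_eq_sum_pd {n : ℕ} (f : (Fin n → ℝ) → ℝ) (x v : Fin n → ℝ) :
    fderiv ℝ f x v = ∑ i, v i * pd i f x := by
  conv_lhs => rw [pi_eq_sum_univ' v]
  simp only [map_sum, map_smul, smul_eq_mul, pd]

lemma hasDerivAt_comp_lineMap {n : ℕ} {f : (Fin n → ℝ) → ℝ} {y z : Fin n → ℝ} {t : ℝ}
    (hf : DifferentiableAt ℝ f (AffineMap.lineMap y z t)) :
    HasDerivAt (fun s : ℝ => f (AffineMap.lineMap y z s))
      (∑ i, (z i - y i) * pd i f (AffineMap.lineMap y z t)) t := by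
  have h := hf.hasFDerivAt.comp_hasDerivAt t (AffineMap.hasDerivAt_lineMap (a := y) (b := z))
  rw [fderiv_apply_eq_sum_pd] at h
  exact h

lemma eq_of_hasDerivAt_zero {φ : ℝ → ℝ}
    (h : ∀ t ∈ Set.Icc (0 : ℝ) 1, HasDerivAt φ 0 t) : φ 1 = φ 0 :=
  constant_of_has_deriv_right_zero (fun t ht => (h t ht).continuousAt.continuousWithinAt)
    (fun t ht => (h t ⟨ht.1, ht.2.le⟩).hasDerivWithinAt) 1 ⟨zero_le_one, le_rfl⟩

/-- When the mixed second partials vanish on a convex set, `∂_j f` depends only on the `j`-th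
coordinate there. -/
lemma pd_eq_of_coord_eq {n : ℕ} {U : Set (Fin n → ℝ)} (hconv : Convex ℝ U)
    {f : (Fin n → ℝ) → ℝ} {j : Fin n} (hd : ∀ x ∈ U, DifferentiableAt ℝ (pd j f) x)
    (hmix : ∀ i, i ≠ j → ∀ x ∈ U, pd i (pd j f) x = 0)
    {x y : Fin n → ℝ} (hx : x ∈ U) (hy : y ∈ U) (hxy : x j = y j) : pd j f x = pd j f y := by
  have key := eq_of_hasDerivAt_zero (φ := fun s : ℝ => pd j f (AffineMap.lineMap y x s)) ?_
  · simpa using key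
  intro t ht
  have hm : AffineMap.lineMap y x t ∈ U := hconv.lineMap_mem hy hx ht
  convert hasDerivAt_comp_lineMap (hd _ hm) using 1
  refine (Finset.sum_eq_zero fun i _ => ?_).symm
  by_cases hij : i = j
  · simp [hij, hxy]
  · simp [hmix i hij _ hm]

theorem stmt_12 {n : ℕ} (hn : 1 ≤ n) (a b : Fin n → ℝ)
    (U : Set (Fin n → ℝ)) (hU : U = {x | ∀ i : Fin n, x i ∈ Set.Ioo (a i) (b i)})
    (hUne : U.Nonempty)
    (f : (Fin n → ℝ) → ℝ) (hf : ContDiffOn ℝ 2 f U)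
    (hmix : ∀ i j : Fin n, i ≠ j → ∀ x ∈ U, pd i (pd j f) x = 0) :
    ∃ g : Fin n → ℝ → ℝ,
      (∀ i : Fin n, ContDiffOn ℝ 2 (g i) (Set.Ioo (a i) (b i))) ∧
      ∀ x ∈ U, f x = ∑ i : Fin n, g i (x i) := by
  obtain ⟨p, hp⟩ := hUne
  have hUpi : U = Set.univ.pi fun i => Set.Ioo (a i) (b i) := by
    rw [hU]; ext x; simp [Set.mem_pi]
  have hopen : IsOpen U := by
    rw [hUpi]; exact isOpen_set_pi Set.finite_univ fun i _ => isOpen_Ioo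
  have hconv : Convex ℝ U := by
    rw [hUpi]; exact convex_pi fun i _ => convex_Ioo _ _
  have hmem : ∀ x, x ∈ U ↔ ∀ i, x i ∈ Set.Ioo (a i) (b i) := fun x => by rw [hU]; rfl
  have hup : ∀ i t, t ∈ Set.Ioo (a i) (b i) → Function.update p i t ∈ U := by
    intro i t ht
    rw [hmem] at hp ⊢
    intro k
    by_cases hk : k = i
    · subst hk; simpa using ht
    · simpa [Function.update_of_ne hk] using hp k
  have hfd : ∀ x ∈ U, DifferentiableAt ℝ f x := fun x hx =>
    (hf.contDiffAt (hopen.mem_nhds hx)).differentiableAt (by norm_num)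
  have hpd : ∀ j, ∀ x ∈ U, DifferentiableAt ℝ (pd j f) x := fun j x hx =>
    (((hf.contDiffAt (hopen.mem_nhds hx)).fderiv_right (m := 1) (by norm_num)).differentiableAt
      (by norm_num)).clm_apply (differentiableAt_const _)
  -- The constants add up to `f p - n * f p`, the correction required at `x = p`.
  refine ⟨fun i t => f (Function.update p i t) - f p + f p / n, fun i => ?_, fun x hx => ?_⟩
  · refine ((hf.comp (contDiff_update 2 p i).contDiffOn fun t ht => hup i t ht).sub
      contDiffOn_const).add contDiffOn_const
  · have key := eq_of_hasDerivAt_zero (φ := fun t : ℝ => f (AffineMap.lineMap p x t) -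
      ∑ i, f (AffineMap.lineMap p (Function.update p i (x i)) t)) ?_
    · simp only [AffineMap.lineMap_apply_one, AffineMap.lineMap_apply_zero, Finset.sum_const,
        Finset.card_univ, Fintype.card_fin, nsmul_eq_mul] at key
      have hn0 : (n : ℝ) ≠ 0 := by exact_mod_cast (by omega : n ≠ 0)
      simp only [Finset.sum_add_distrib, Finset.sum_sub_distrib, Finset.sum_const,
        Finset.card_univ, Fintype.card_fin, nsmul_eq_mul, mul_div_cancel₀ _ hn0]
      linarith
    · intro t ht
      have hm := hconv.lineMap_mem hp hx ht
      have hmi : ∀ i, AffineMap.lineMap p (Function.update p i (x i)) t ∈ U := fun i =>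
        hconv.lineMap_mem hp (hup i _ ((hmem x).1 hx i)) ht
      refine ((hasDerivAt_comp_lineMap (hfd _ hm)).sub
        (HasDerivAt.fun_sum fun i _ => hasDerivAt_comp_lineMap (hfd _ (hmi i)))).congr_deriv ?_
      rw [← Finset.sum_sub_distrib]
      refine Finset.sum_eq_zero fun i _ => ?_
      rw [Finset.sum_eq_single i (fun k _ hk => by simp [Function.update_of_ne hk]) (by simp),
        pd_eq_of_coord_eq hconv (hpd i) (fun k hk => hmix k i hk) hm (hmi i)
          (by simp [AffineMap.lineMap_apply])]
      simp
end

section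
/- Let I ⊆ (0,∞) and J ⊆ ℝ be nonempty open intervals, and let f : I × J → ℝ be a smooth function of the variables (r, v) satisfying ∂²f/∂v² = r·∂²f/∂r² and ∂³f/∂r²∂v = 0 on I × J. Then there exist constants a, b, c, d, e, h ∈ ℝ such that f(r,v) = a·(r v²/2 + r²/2) + b·(v²/2 + r·log r) + c·r v + d·v + e·r + h for all (r,v) ∈ I × J. -/
lemma pd_congr_s15 {U : Set (Fin 2 → ℝ)} (hU : IsOpen U) {f g : (Fin 2 → ℝ) → ℝ}
    (h : ∀ p ∈ U, f p = g p) (i : Fin 2) : ∀ p ∈ U, pd i f p = pd i g p := by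
  intro p hp
  have : f =ᶠ[nhds p] g := Filter.eventually_of_mem (hU.mem_nhds hp) h
  simp only [pd, this.fderiv_eq]

lemma pd_smooth {U : Set (Fin 2 → ℝ)} (hU : IsOpen U) {f : (Fin 2 → ℝ) → ℝ}
    (hf : ContDiffOn ℝ (⊤ : ℕ∞) f U) (i : Fin 2) : ContDiffOn ℝ (⊤ : ℕ∞) (pd i f) U :=
  (hf.fderiv_of_isOpen hU (m := (⊤ : ℕ∞)) (by simp)).clm_apply contDiffOn_const

lemma pd_comm_s15 {U : Set (Fin 2 → ℝ)} (hU : IsOpen U) {f : (Fin 2 → ℝ) → ℝ}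
    (hf : ContDiffOn ℝ (⊤ : ℕ∞) f U) (i j : Fin 2) :
    ∀ p ∈ U, pd i (pd j f) p = pd j (pd i f) p := by
  intro p hp
  have hs : IsSymmSndFDerivAt ℝ f p :=
    (hf.contDiffAt (hU.mem_nhds hp)).isSymmSndFDerivAt (by simp; exact WithTop.coe_le_coe.2 le_top)
  have hd : DifferentiableAt ℝ (fderiv ℝ f) p :=
    ((hf.fderiv_of_isOpen hU (m := (⊤ : ℕ∞)) (by simp)).contDiffAt
      (hU.mem_nhds hp)).differentiableAt (by simp)
  have key : ∀ k l : Fin 2, pd k (pd l f) p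
      = fderiv ℝ (fderiv ℝ f) p (Pi.single k 1) (Pi.single l 1) := by
    intro k l
    have := (hd.hasFDerivAt.clm_apply (hasFDerivAt_const (Pi.single l (1 : ℝ)) p)).fderiv
    unfold pd
    rw [this]
    simp
  rw [key, key]
  exact hs _ _

/-- The linear form on `Fin 2 → ℝ` with coefficients `A`, `B`, i.e. `A dr + B dv`. -/
noncomputable def form (A B : ℝ) : (Fin 2 → ℝ) →L[ℝ] ℝ :=
  A • ContinuousLinearMap.proj (R := ℝ) (φ := fun _ : Fin 2 => ℝ) 0
    + B • ContinuousLinearMap.proj (R := ℝ) (φ := fun _ : Fin 2 => ℝ) 1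

lemma fderiv_eq_form (g : (Fin 2 → ℝ) → ℝ) (p : Fin 2 → ℝ) :
    fderiv ℝ g p = form (pd 0 g p) (pd 1 g p) := by
  ext x
  have hx : x = x 0 • Pi.single (0 : Fin 2) (1 : ℝ) + x 1 • Pi.single (1 : Fin 2) (1 : ℝ) := by
    ext i; fin_cases i <;> simp
  conv_lhs => rw [hx]
  rw [map_add, map_smul, map_smul]
  simp [form, pd, mul_comm]

/-- On a convex open set, a function is determined up to a constant by its partial derivatives:
if `dg = A dr + B dv = dk` then `g - k` is constant. -/
lemma exists_eq_add_const {U : Set (Fin 2 → ℝ)} (hU : IsOpen U) (hc : Convex ℝ U)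
    {g : (Fin 2 → ℝ) → ℝ} (hg : ContDiffOn ℝ (⊤ : ℕ∞) g U) (k A B : (Fin 2 → ℝ) → ℝ)
    (hA : ∀ p ∈ U, pd 0 g p = A p) (hB : ∀ p ∈ U, pd 1 g p = B p)
    (hk : ∀ p ∈ U, HasFDerivAt k (form (A p) (B p)) p) :
    ∃ C : ℝ, ∀ p ∈ U, g p = k p + C := by
  have hd : ∀ p ∈ U, HasFDerivAt (fun q => g q - k q) (0 : (Fin 2 → ℝ) →L[ℝ] ℝ) p := by
    intro p hp
    have h := ((hg.contDiffAt (hU.mem_nhds hp)).differentiableAt (by simp)).hasFDerivAt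
    rw [fderiv_eq_form, hA p hp, hB p hp] at h
    have h2 := h.sub (hk p hp)
    rw [sub_self] at h2
    exact h2
  obtain ⟨C, hC⟩ := hU.exists_is_const_of_fderiv_eq_zero hc.isPreconnected
    (fun p hp => (hd p hp).differentiableAt.differentiableWithinAt)
    (fun p hp => (hd p hp).fderiv)
  exact ⟨C, fun p hp => by have := hC p hp; linarith⟩

lemma hasFDerivAt_coord (i : Fin 2) (p : Fin 2 → ℝ) :
    HasFDerivAt (fun q : Fin 2 → ℝ => q i)
      (ContinuousLinearMap.proj (R := ℝ) (φ := fun _ : Fin 2 => ℝ) i) p :=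
  (ContinuousLinearMap.proj (R := ℝ) (φ := fun _ : Fin 2 => ℝ) i).hasFDerivAt

/-- Classification of candidate extendable conserved densities of the dispersionless
water-wave system: a smooth solution of `f_vv = r f_rr`, `f_rrv = 0` on a box
`I × J ⊆ (0,∞) × ℝ` is a linear combination of `rv²/2 + r²/2`, `v²/2 + r log r`,
`rv`, `v`, `r`, `1`. -/
theorem stmt_15 (r₁ r₂ v₁ v₂ : ℝ)
    (hI : Set.Ioo r₁ r₂ ⊆ Set.Ioi (0 : ℝ)) (hIne : (Set.Ioo r₁ r₂).Nonempty)
    (hJne : (Set.Ioo v₁ v₂).Nonempty)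
    (U : Set (Fin 2 → ℝ))
    (hU : U = {p : Fin 2 → ℝ | p 0 ∈ Set.Ioo r₁ r₂ ∧ p 1 ∈ Set.Ioo v₁ v₂})
    (f : (Fin 2 → ℝ) → ℝ) (hf : ContDiffOn ℝ (⊤ : ℕ∞) f U)
    (h1 : ∀ p ∈ U, pd 1 (pd 1 f) p = p 0 * pd 0 (pd 0 f) p)
    (h2 : ∀ p ∈ U, pd 0 (pd 0 (pd 1 f)) p = 0) :
    ∃ a b c d e h : ℝ, ∀ p ∈ U,
      f p = a * (p 0 * (p 1) ^ 2 / 2 + (p 0) ^ 2 / 2)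
        + b * ((p 1) ^ 2 / 2 + p 0 * Real.log (p 0))
        + c * (p 0 * p 1) + d * p 1 + e * p 0 + h := by
  have hUo : IsOpen U := by
    rw [hU]
    exact (isOpen_Ioo.preimage (continuous_apply 0)).inter
      (isOpen_Ioo.preimage (continuous_apply 1))
  have hUc : Convex ℝ U := by
    rw [hU]
    exact ((convex_Ioo r₁ r₂).linear_preimage (LinearMap.proj (R := ℝ) (φ := fun _ : Fin 2 => ℝ) 0)).inter
      ((convex_Ioo v₁ v₂).linear_preimage (LinearMap.proj (R := ℝ) (φ := fun _ : Fin 2 => ℝ) 1))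
  have hpos : ∀ p ∈ U, 0 < p 0 := by
    intro p hp
    rw [hU] at hp
    exact hI hp.1
  have h0 := pd_smooth hUo hf 0
  have h1s := pd_smooth hUo hf 1
  have h00 := pd_smooth hUo h0 0
  have h01 := pd_smooth hUo h1s 0
  have h11 := pd_smooth hUo h1s 1
  have c01 := pd_comm_s15 hUo hf 0 1
  have f001 : ∀ p ∈ U, pd 1 (pd 0 (pd 0 f)) p = 0 := by
    intro p hp
    rw [pd_comm_s15 hUo h0 1 0 p hp, ← pd_congr_s15 hUo c01 0 p hp, h2 p hp]
  have w1 : ∀ p ∈ U, pd 1 (pd 1 (pd 1 f)) p = 0 := by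
    intro p hp
    rw [pd_congr_s15 hUo h1 1 p hp]
    have hd := ((h00.contDiffAt (hUo.mem_nhds hp)).differentiableAt (by simp)).hasFDerivAt
    have := ((hasFDerivAt_coord 0 p).mul hd).fderiv
    have hv := f001 p hp
    calc pd 1 (fun q => q 0 * pd 0 (pd 0 f) q) p
        = (p 0 • fderiv ℝ (pd 0 (pd 0 f)) p + pd 0 (pd 0 f) p •
            ContinuousLinearMap.proj (R := ℝ) (φ := fun _ : Fin 2 => ℝ) 0)
            (Pi.single 1 1) := congrArg (fun L => L (Pi.single 1 1)) this
      _ = p 0 * pd 1 (pd 0 (pd 0 f)) p := by simp [pd]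
      _ = 0 := by rw [hv, mul_zero]
  have w00 : ∀ p ∈ U, pd 0 (pd 0 (pd 1 (pd 1 f))) p = 0 := by
    intro p hp
    rw [pd_congr_s15 hUo (pd_comm_s15 hUo h1s 0 1) 0 p hp, pd_comm_s15 hUo h01 0 1 p hp,
      pd_congr_s15 hUo h2 1 p hp]
    simp [pd]
  have w01 : ∀ p ∈ U, pd 1 (pd 0 (pd 1 (pd 1 f))) p = 0 := by
    intro p hp
    rw [pd_comm_s15 hUo h11 1 0 p hp, pd_congr_s15 hUo w1 0 p hp]
    simp [pd]
  obtain ⟨a, ha⟩ := exists_eq_add_const hUo hUc (pd_smooth hUo h11 0) (fun _ => 0) (fun _ => 0)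
    (fun _ => 0) w00 w01 (fun p _ => by simpa [form] using hasFDerivAt_const (0 : ℝ) p)
  simp only [zero_add] at ha
  obtain ⟨b, hb⟩ := exists_eq_add_const hUo hUc h11 (fun p => a * p 0) (fun _ => a) (fun _ => 0) ha w1
    (fun p _ => by
      refine ((hasFDerivAt_coord 0 p).const_mul a).congr_fderiv ?_
      ext x; simp [form])
  have hrr : ∀ p ∈ U, pd 0 (pd 0 f) p = a + b / p 0 := by
    intro p hp
    have hp0 := (hpos p hp).ne'
    have e1 := h1 p hp
    rw [hb p hp] at e1
    field_simp
    linarith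
  obtain ⟨c, hc⟩ := exists_eq_add_const hUo hUc h01 (fun p => a * p 1) (fun _ => 0) (fun _ => a) h2
    (fun p hp => by rw [← pd_comm_s15 hUo h1s 0 1 p hp, ha p hp])
    (fun p _ => by
      refine ((hasFDerivAt_coord 1 p).const_mul a).congr_fderiv ?_
      ext x; simp [form])
  obtain ⟨e, he⟩ := exists_eq_add_const hUo hUc h0
    (fun p => a * p 0 + b * Real.log (p 0) + a / 2 * (p 1 * p 1) + c * p 1)
    (fun p => a + b / p 0) (fun p => a * p 1 + c) hrr
    (fun p hp => by rw [← c01 p hp, hc p hp])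
    (fun p hp => by
      have hp0 := (hpos p hp).ne'
      have r := hasFDerivAt_coord 0 p
      have v := hasFDerivAt_coord 1 p
      refine ((((r.const_mul a).add ((r.log hp0).const_mul b)).add
        ((v.mul v).const_mul (a / 2))).add (v.const_mul c)).congr_fderiv ?_
      ext x; simp [form]; field_simp; ring)
  obtain ⟨d, hd⟩ := exists_eq_add_const hUo hUc h1s
    (fun p => a * (p 0 * p 1) + c * p 0 + b * p 1)
    (fun p => a * p 1 + c) (fun p => a * p 0 + b) hc hb
    (fun p hp => by
      have r := hasFDerivAt_coord 0 p
      have v := hasFDerivAt_coord 1 p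
      refine ((((r.mul v).const_mul a).add (r.const_mul c)).add (v.const_mul b)).congr_fderiv ?_
      ext x; simp [form]; ring)
  -- The coefficient of `r` is `e - b` because `(r log r)' = log r + 1`.
  obtain ⟨h, hh⟩ := exists_eq_add_const hUo hUc hf
    (fun p => a / 2 * (p 0 * (p 1 * p 1)) + a / 2 * (p 0 * p 0) + b / 2 * (p 1 * p 1)
      + b * (p 0 * Real.log (p 0)) + c * (p 0 * p 1) + d * p 1 + (e - b) * p 0) _ _ he hd
    (fun p hp => by
      have hp0 := (hpos p hp).ne'
      have r := hasFDerivAt_coord 0 p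
      have v := hasFDerivAt_coord 1 p
      refine (((((((r.mul (v.mul v)).const_mul (a / 2)).add ((r.mul r).const_mul (a / 2))).add
        ((v.mul v).const_mul (b / 2))).add ((r.mul (r.log hp0)).const_mul b)).add
        ((r.mul v).const_mul c)).add (v.const_mul d)).add (r.const_mul (e - b))
        |>.congr_fderiv ?_
      ext x; simp [form]; field_simp; ring)
  refine ⟨a, b, c, d, e - b, h, fun p hp => ?_⟩
  rw [hh p hp]
  ring
end
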